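/- arXiv:1509.04985 — 3 statements merged into one kernel-verified Lean document; each statement's English description precedes it below -/
import Mathlib

section
/- Let X be a compact Hausdorff totally disconnected (equivalently, zero-dimensional) space. Then f ∈ C(X,X) is a P-point of C_k(X,X) if and only if the range of f is finite and every point of the range of f is a P-point of X. -/
/-- A point `p` is a P-point if every countable intersection of open sets containing `p`
is a neighbourhood of `p`. -/
def IsPPoint {Y : Type*} [TopologicalSpace Y] (p : Y) : Prop :=
  ∀ U : ℕ → Set Y, (∀ n, IsOpen (U n) ∧ p ∈ U n) → (⋂ n, U n) ∈ nhds p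

open Topology Filter Set Uniformity

theorem aux_finite (X : Type*) [TopologicalSpace X] [CompactSpace X] [T2Space X]
    [TotallyDisconnectedSpace X] (f : C(X, X)) (hf : IsPPoint f) : (Set.range f).Finite := by
  classical
  by_contra hinf
  have hinf : (Set.range f).Infinite := hinf
  let y : ℕ → X := fun n => (hinf.natEmbedding _ n : X)
  have hy : Function.Injective y := fun a b h =>
    (hinf.natEmbedding _).injective (Subtype.ext h)
  have hx : ∀ n, ∃ x, f x = y n := fun n => (hinf.natEmbedding _ n).2
  choose x hx using hx
  letI : UniformSpace X := uniformSpaceOfCompactR1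
  let N : ℕ × ℕ → Set C(X, X) := fun p => {g | p.1 ≠ p.2 → g (x p.1) ≠ y p.2}
  have hN : ∀ p, IsOpen (N p) ∧ f ∈ N p := by
    rintro ⟨n, m⟩
    by_cases h : n = m
    · have : N (n, m) = univ := by ext g; simp [N, h]
      rw [this]; exact ⟨isOpen_univ, trivial⟩
    · have : N (n, m) = {g | g (x n) ≠ y m} := by ext g; simp [N, h]
      rw [this]
      refine ⟨isOpen_ne_fun (continuous_eval_const _) continuous_const, ?_⟩
      simp only [mem_ofPred_eq, hx]
      exact fun e => h (hy e)
  have key := hf (fun k => N (Nat.unpair k)) (fun k => hN _)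
  rw [UniformSpace.mem_nhds_iff] at key
  obtain ⟨V, hV, hVs⟩ := key
  rw [(ContinuousMap.hasBasis_compactConvergenceUniformity_of_compact).mem_iff] at hV
  obtain ⟨E, hE, hEV⟩ := hV
  obtain ⟨E', hE', hsymm, hcomp⟩ := comp_symm_mem_uniformity_sets hE
  obtain ⟨z, hz⟩ := exists_clusterPt_of_compactSpace (map y atTop)
  have hz : MapClusterPt z atTop y := hz
  have hfr := hz.frequently (UniformSpace.ball_mem_nhds z (interior_mem_uniformity hE'))
  rw [frequently_atTop] at hfr
  obtain ⟨n, -, hn⟩ := hfr 0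
  obtain ⟨m, hm, hm'⟩ := hfr (n + 1)
  have hop : IsOpen (UniformSpace.ball z (interior E')) :=
    UniformSpace.isOpen_ball z isOpen_interior
  obtain ⟨D, hD, hnD, hDs⟩ := compact_exists_isClopen_in_isOpen hop hn
  have hc : IsClopen (f ⁻¹' D) := hD.preimage f.continuous
  let g : C(X, X) := ⟨(f ⁻¹' D).piecewise (fun _ => y m) f,
    continuous_const.piecewise (by intro a ha; rw [hc.frontier_eq] at ha; exact ha.elim) f.continuous⟩
  have hg : g ∈ UniformSpace.ball f V := by
    apply hEV
    intro a
    show (f a, (f ⁻¹' D).piecewise (fun _ => y m) f a) ∈ E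
    by_cases ha : a ∈ f ⁻¹' D
    · rw [Set.piecewise_eq_of_mem _ _ _ ha]
      exact hcomp ⟨z, hsymm.symm _ _ (interior_subset (hDs ha)), interior_subset hm'⟩
    · rw [Set.piecewise_eq_of_notMem _ _ _ ha]
      exact refl_mem_uniformity hE
  have h1 := hVs hg
  rw [mem_iInter] at h1
  have h2 := h1 (Nat.pair n m)
  simp only [Nat.unpair_pair, N, mem_ofPred_eq] at h2
  apply h2 (by omega)
  show (f ⁻¹' D).piecewise (fun _ => y m) f (x n) = y m
  apply Set.piecewise_eq_of_mem
  show f (x n) ∈ D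
  rw [hx]; exact hnD

/-- For a compact Hausdorff zero-dimensional (totally disconnected) space `X`, a map
`f ∈ C(X, X)` is a P-point of `C_k(X, X)` iff its range is finite and consists of P-points
of `X`. -/
theorem isPPoint_iff_finite_range_of_pPoints
    (X : Type*) [TopologicalSpace X] [CompactSpace X] [T2Space X]
    [TotallyDisconnectedSpace X] (f : C(X, X)) :
    IsPPoint f ↔ (Set.range f).Finite ∧ ∀ y ∈ Set.range f, IsPPoint y := by
  classical
  constructor
  · intro hf
    have hfin := aux_finite X f hf
    refine ⟨hfin, ?_⟩
    rintro _ ⟨x, rfl⟩ U hU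
    have key := hf (fun n => {g | g x ∈ U n}) (fun n =>
      ⟨(hU n).1.preimage (continuous_eval_const x), (hU n).2⟩)
    have hc : IsClopen (f ⁻¹' {f x}) := by
      refine ⟨isClosed_singleton.preimage f.continuous, ?_⟩
      have h1 : f ⁻¹' {f x} = (f ⁻¹' (range f \ {f x}))ᶜ := by
        ext a; simp
      rw [h1, isOpen_compl_iff]
      exact (hfin.subset sdiff_subset).isClosed.preimage f.continuous
    have hcont : Continuous (fun p : X × X => if p.2 ∈ f ⁻¹' {f x} then p.1 else f p.2) := by
      refine continuous_fst.if ?_ (f.continuous.comp continuous_snd)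
      intro a ha
      have h2 : IsClopen {p : X × X | p.2 ∈ f ⁻¹' {f x}} := hc.preimage continuous_snd
      rw [h2.frontier_eq] at ha
      exact ha.elim
    let G : X → C(X, X) := fun z => ⟨fun a => if a ∈ f ⁻¹' {f x} then z else f a,
      hcont.comp (Continuous.prodMk_right z)⟩
    have hG : Continuous G := ContinuousMap.continuous_of_continuous_uncurry _ hcont
    have hGf : G (f x) = f := by
      ext a
      show (if a ∈ f ⁻¹' {f x} then f x else f a) = f a
      split_ifs with h
      · exact h.symm
      · rfl
    have h3 : G ⁻¹' (⋂ n, {g : C(X, X) | g x ∈ U n}) ∈ 𝓝 (f x) :=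
      hG.continuousAt.preimage_mem_nhds (by rw [hGf]; exact key)
    refine mem_of_superset h3 ?_
    intro z hz
    simp only [mem_preimage, mem_iInter, mem_ofPred_eq] at hz ⊢
    intro n
    simpa [G] using hz n
  · rintro ⟨hfin, hP⟩ U hU
    let L : Filter C(X, X) :=
      { sets := {S | ∃ W : X → Set X, (∀ y ∈ range f, IsOpen (W y) ∧ y ∈ W y) ∧
          {g : C(X, X) | ∀ x, g x ∈ W (f x)} ⊆ S}
        univ_sets := ⟨fun _ => univ, by simp, by simp⟩
        sets_of_superset := by
          rintro S T ⟨W, h1, h2⟩ h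
          exact ⟨W, h1, h2.trans h⟩
        inter_sets := by
          rintro S T ⟨W, h1, h2⟩ ⟨W', h1', h2'⟩
          exact ⟨fun y => W y ∩ W' y, fun y hy =>
            ⟨(h1 y hy).1.inter (h1' y hy).1, (h1 y hy).2, (h1' y hy).2⟩,
            fun g hg => ⟨h2 fun x => (hg x).1, h2' fun x => (hg x).2⟩⟩ }
    have hL : Tendsto id L (𝓝 f) := by
      rw [ContinuousMap.tendsto_nhds_compactOpen]
      intro K _ O hO hm
      refine ⟨fun y => if y ∈ f '' K then O else univ, ?_, ?_⟩
      · intro y _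
        by_cases h : y ∈ f '' K
        · simp only [if_pos h]
          obtain ⟨a, ha, rfl⟩ := h
          exact ⟨hO, hm ha⟩
        · simp only [if_neg h]
          exact ⟨isOpen_univ, trivial⟩
      · intro g hg a ha
        have := hg a
        beta_reduce at this
        rwa [if_pos (mem_image_of_mem f ha)] at this
    have hW : ∀ n, ∃ W : X → Set X, (∀ y ∈ range f, IsOpen (W y) ∧ y ∈ W y) ∧
          {g : C(X, X) | ∀ x, g x ∈ W (f x)} ⊆ U n := fun n =>
      hL ((hU n).1.mem_nhds (hU n).2)
    choose W hW hWU using hW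
    have hI : ∀ y ∈ range f, (⋂ n, W n y) ∈ 𝓝 y := fun y hy =>
      hP y hy (fun n => W n y) (fun n => hW n y hy)
    have hmem : (⋂ y ∈ range f, {g : C(X, X) | MapsTo g (f ⁻¹' {y}) (interior (⋂ n, W n y))})
        ∈ 𝓝 f := by
      rw [biInter_mem hfin]
      intro y hy
      refine (ContinuousMap.isOpen_setOfPred_mapsTo
        (isClosed_singleton.preimage f.continuous).isCompact isOpen_interior).mem_nhds ?_
      intro a ha
      have ha : f a = y := ha
      rw [ha]
      exact mem_interior_iff_mem_nhds.2 (hI y hy)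
    refine mem_of_superset hmem ?_
    intro g hg
    rw [mem_iInter]
    intro n
    apply hWU n
    intro a
    have h1 := mem_iInter₂.1 hg (f a) ⟨a, rfl⟩
    have h2 : g a ∈ interior (⋂ n, W n (f a)) := h1 rfl
    exact mem_iInter.1 (interior_subset h2) n
end

section
/- Let X be a compact Hausdorff F-space that is nowhere c.c.c. Then every f ∈ C(X,X) that is an open map and has finite fibers (the preimage of every point is finite) is a weak P-point of C_k(X,X). -/
/-- A cozero-set of a topological space. -/
def IsCozero {Y : Type*} [TopologicalSpace Y] (s : Set Y) : Prop :=
  ∃ g : Y → ℝ, Continuous g ∧ s = {y | g y ≠ 0}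

/-- Two sets are completely separated if some continuous real-valued function is `0` on the
first and `1` on the second. -/
def CompletelySeparated {Y : Type*} [TopologicalSpace Y] (A B : Set Y) : Prop :=
  ∃ h : Y → ℝ, Continuous h ∧ (∀ a ∈ A, h a = 0) ∧ (∀ b ∈ B, h b = 1)

/-- A space is an F-space if any two disjoint cozero-sets are completely separated. -/
def IsFSpace (Y : Type*) [TopologicalSpace Y] : Prop :=
  ∀ A B : Set Y, IsCozero A → IsCozero B → A ∩ B = ∅ → CompletelySeparated A B

/-- A space is nowhere c.c.c. if every nonempty open set contains an uncountable pairwise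
disjoint family of nonempty open sets. -/
def NowhereCCC (Y : Type*) [TopologicalSpace Y] : Prop :=
  ∀ U : Set Y, IsOpen U → U.Nonempty →
    ∃ 𝒱 : Set (Set Y), ¬𝒱.Countable ∧ (∀ V ∈ 𝒱, IsOpen V ∧ V.Nonempty ∧ V ⊆ U) ∧
      𝒱.Pairwise Disjoint

/-- A point `p` is a weak P-point if it is not in the closure of any countable set avoiding
`p`. -/
def IsWeakPPoint {Y : Type*} [TopologicalSpace Y] (p : Y) : Prop :=
  ∀ S : Set Y, S.Countable → p ∉ S → p ∉ closure S

open Set Topology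

theorem cozero_iUnion {Y : Type*} [TopologicalSpace Y] (s : ℕ → Set Y)
    (hs : ∀ n, IsCozero (s n)) : IsCozero (⋃ n, s n) := by
  choose g hg hsg using hs
  have hsum : Summable (fun n : ℕ => ((1 : ℝ) / 2) ^ n) := summable_geometric_two
  have hnn : ∀ n y, 0 ≤ ((1 : ℝ) / 2) ^ n * min 1 |g n y| := fun n y => by positivity
  have hle : ∀ n y, ((1 : ℝ) / 2) ^ n * min 1 |g n y| ≤ (1 / 2) ^ n := fun n y =>
    mul_le_of_le_one_right (by positivity) (min_le_left _ _)
  refine ⟨fun y => ∑' n, ((1 : ℝ) / 2) ^ n * min 1 |g n y|, ?_, ?_⟩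
  · refine continuous_tsum (fun n => ?_) hsum ?_
    · have := hg n
      fun_prop
    · intro n y
      rw [Real.norm_of_nonneg (hnn n y)]
      exact hle n y
  · ext y
    have hsy : Summable (fun n => ((1 : ℝ) / 2) ^ n * min 1 |g n y|) :=
      Summable.of_nonneg_of_le (fun n => hnn n y) (fun n => hle n y) hsum
    simp only [mem_iUnion, mem_ofPred_eq]
    constructor
    · rintro ⟨n, hn⟩
      rw [hsg n] at hn
      have hpos : 0 < ((1 : ℝ) / 2) ^ n * min 1 |g n y| := by
        have : 0 < |g n y| := abs_pos.mpr hn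
        positivity
      exact (hsy.tsum_pos (fun m => hnn m y) n hpos).ne'
    · intro h
      by_contra hcon
      push Not at hcon
      apply h
      have : ∀ n, ((1 : ℝ) / 2) ^ n * min 1 |g n y| = 0 := by
        intro n
        have h1 := hcon n
        rw [hsg n] at h1
        simp only [mem_ofPred_eq, not_not] at h1
        simp [h1]
      simp only [this, tsum_zero]

theorem cozero_empty {Y : Type*} [TopologicalSpace Y] : IsCozero (∅ : Set Y) :=
  ⟨fun _ => 0, continuous_const, by simp⟩

theorem cozero_sUnion {Y : Type*} [TopologicalSpace Y] (S : Set (Set Y)) (hS : S.Countable)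
    (hs : ∀ s ∈ S, IsCozero s) : IsCozero (⋃₀ S) := by
  rcases S.eq_empty_or_nonempty with rfl | hne
  · simpa using cozero_empty
  · obtain ⟨e, rfl⟩ := hS.exists_eq_range hne
    rw [sUnion_range]
    exact cozero_iUnion e (fun n => hs _ ⟨n, rfl⟩)

theorem cozero_open {Y : Type*} [TopologicalSpace Y] {s : Set Y} (hs : IsCozero s) :
    IsOpen s := by
  obtain ⟨g, hg, rfl⟩ := hs
  exact isOpen_ne_fun hg continuous_const

theorem fspace_disjoint_closure {Y : Type*} [TopologicalSpace Y] (hF : IsFSpace Y)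
    {A B : Set Y} (hA : IsCozero A) (hB : IsCozero B) (h : Disjoint A B) :
    Disjoint (closure A) (closure B) := by
  obtain ⟨g, hg, h0, h1⟩ := hF A B hA hB h.inter_eq
  have hA' : closure A ⊆ g ⁻¹' {0} :=
    closure_minimal (fun a ha => h0 a ha) (isClosed_singleton.preimage hg)
  have hB' : closure B ⊆ g ⁻¹' {1} :=
    closure_minimal (fun a ha => h1 a ha) (isClosed_singleton.preimage hg)
  rw [Set.disjoint_left]
  intro x hx hx'
  have e0 : g x = 0 := hA' hx
  have e1 : g x = 1 := hB' hx'
  linarith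

theorem exists_cozero_nhd {X : Type*} [TopologicalSpace X] [CompactSpace X] [T2Space X]
    {U : Set X} (hU : IsOpen U) {x : X} (hx : x ∈ U) :
    ∃ V, IsCozero V ∧ x ∈ V ∧ V ⊆ U := by
  obtain ⟨g, h0, h1, -⟩ := exists_continuous_zero_one_of_isClosed hU.isClosed_compl
    (isClosed_singleton (x := x)) (by simpa using hx)
  refine ⟨{y | g y ≠ 0}, ⟨g, g.continuous, rfl⟩, ?_, ?_⟩
  · have : g x = 1 := h1 rfl
    simp [this]
  · intro y hy
    by_contra hc
    exact hy (h0 hc)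

theorem ccc_cozero {X : Type*} [TopologicalSpace X] [CompactSpace X] [T2Space X]
    (hccc : NowhereCCC X) (U : Set X) (hU : IsOpen U) (hne : U.Nonempty) :
    ∃ 𝒱 : Set (Set X), ¬𝒱.Countable ∧ (∀ V ∈ 𝒱, IsCozero V ∧ V.Nonempty ∧ V ⊆ U) ∧
      𝒱.Pairwise Disjoint := by
  obtain ⟨𝒱, hunc, hV, hd⟩ := hccc U hU hne
  have : ∀ V : Set X, ∃ W, V ∈ 𝒱 → IsCozero W ∧ W.Nonempty ∧ W ⊆ V := by
    intro V
    by_cases h : V ∈ 𝒱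
    · obtain ⟨ho, ⟨x, hx⟩, _⟩ := hV V h
      obtain ⟨W, h1, h2, h3⟩ := exists_cozero_nhd ho hx
      exact ⟨W, fun _ => ⟨h1, ⟨x, h2⟩, h3⟩⟩
    · exact ⟨∅, fun h' => absurd h' h⟩
  choose s hs using this
  refine ⟨s '' 𝒱, ?_, ?_, ?_⟩
  · intro hc
    apply hunc
    refine Set.MapsTo.countable_of_injOn (Set.mapsTo_image s 𝒱) ?_ hc
    intro V hV1 W hW1 heq
    by_contra hVW
    obtain ⟨-, ⟨x, hx⟩, hsub⟩ := hs V hV1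
    exact Set.disjoint_left.mp (hd hV1 hW1 hVW) (hsub hx) ((hs W hW1).2.2 (heq ▸ hx))
  · rintro _ ⟨V, hV1, rfl⟩
    obtain ⟨h1, h2, h3⟩ := hs V hV1
    exact ⟨h1, h2, h3.trans (hV V hV1).2.2⟩
  · rintro _ ⟨V, hV1, rfl⟩ _ ⟨W, hW1, rfl⟩ hne'
    have : V ≠ W := fun h => hne' (by rw [h])
    exact (hd hV1 hW1 this).mono (hs V hV1).2.2 (hs W hW1).2.2

theorem refine_step {X : Type*} [TopologicalSpace X]
    (hccc : NowhereCCC X) (O : ℕ → Set X) (hO : ∀ n, IsOpen (O n) ∧ (O n).Nonempty) :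
    ∃ P, IsOpen P ∧ P.Nonempty ∧ P ⊆ O 0 ∧ ∀ m, (O m \ closure P).Nonempty := by
  obtain ⟨𝒱, hunc, hV, hd⟩ := hccc (O 0) (hO 0).1 (hO 0).2
  by_contra hcon
  push Not at hcon
  have hex : ∀ P : Set X, ∃ m, P ∈ 𝒱 → O m \ closure P = ∅ := by
    intro P
    by_cases h : P ∈ 𝒱
    · obtain ⟨m, hm⟩ := hcon P (hV P h).1 (hV P h).2.1 (hV P h).2.2
      exact ⟨m, fun _ => hm⟩
    · exact ⟨0, fun h' => absurd h' h⟩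
  choose k hk using hex
  apply hunc
  refine Set.MapsTo.countable_of_injOn (Set.mapsTo_univ k 𝒱) ?_ (Set.countable_univ)
  intro V hV1 W hW1 heq
  by_contra hVW
  have e1 : O (k V) ⊆ closure V := sdiff_eq_bot_iff.mp (hk V hV1)
  have e2 : O (k V) ⊆ closure W := heq ▸ sdiff_eq_bot_iff.mp (hk W hW1)
  obtain ⟨x, hx⟩ := (hO (k V)).2
  obtain ⟨y, hy1, hy2⟩ := mem_closure_iff.mp (e1 hx) _ (hO (k V)).1 hx
  obtain ⟨z, hz1, hz2⟩ := mem_closure_iff.mp (e2 hy1) _ (hV V hV1).1 hy2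
  exact Set.disjoint_left.mp (hd hV1 hW1 hVW) hz1 hz2

theorem disjoint_refinement {X : Type*} [TopologicalSpace X]
    (hccc : NowhereCCC X) (O : ℕ → Set X) (hO : ∀ n, IsOpen (O n) ∧ (O n).Nonempty) :
    ∃ P : ℕ → Set X, (∀ n, IsOpen (P n) ∧ (P n).Nonempty ∧ P n ⊆ O n) ∧
      ∀ m n, m < n → Disjoint (P m) (P n) := by
  have step := fun (s : {O : ℕ → Set X // ∀ n, IsOpen (O n) ∧ (O n).Nonempty}) =>
    refine_step hccc s.1 s.2
  choose p hp1 hp2 hp3 hp4 using step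
  let nxt : {O : ℕ → Set X // ∀ n, IsOpen (O n) ∧ (O n).Nonempty} →
      {O : ℕ → Set X // ∀ n, IsOpen (O n) ∧ (O n).Nonempty} := fun s =>
    ⟨fun m => s.1 (m + 1) \ closure (p s),
      fun m => ⟨(s.2 (m + 1)).1.sdiff isClosed_closure, hp4 s (m + 1)⟩⟩
  let st : ℕ → {O : ℕ → Set X // ∀ n, IsOpen (O n) ∧ (O n).Nonempty} :=
    fun k => Nat.rec ⟨O, hO⟩ (fun _ s => nxt s) k
  have hst : ∀ k m, (st (k + 1)).1 m = (st k).1 (m + 1) \ closure (p (st k)) := fun k m => rfl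
  have hsub : ∀ k m, (st k).1 m ⊆ O (k + m) := by
    intro k
    induction k with
    | zero => intro m; simp [st]
    | succ k ih =>
      intro m
      rw [hst]
      have := ih (m + 1)
      rw [show k + 1 + m = k + (m + 1) by omega]
      exact sdiff_subset.trans this
  have hdis : ∀ j d m, Disjoint (p (st j)) ((st (j + 1 + d)).1 m) := by
    intro j d
    induction d with
    | zero =>
      intro m
      rw [add_zero, hst]
      exact disjoint_sdiff_right.mono_left subset_closure
    | succ d ih =>
      intro m
      rw [show j + 1 + (d + 1) = (j + 1 + d) + 1 by omega, hst]
      exact (ih (m + 1)).mono_right sdiff_subset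
  refine ⟨fun n => p (st n), fun n => ⟨hp1 _, hp2 _, (hp3 _).trans (hsub n 0)⟩, ?_⟩
  intro m n hmn
  obtain ⟨d, rfl⟩ := Nat.exists_eq_add_of_le (Nat.succ_le_of_lt hmn)
  exact (hdis m d 0).mono_right (hp3 _)

noncomputable def twoCol (g : ℕ → ℕ) (n : ℕ) : Bool :=
  if _h : g n < n then !twoCol g (g n) else false
termination_by n

theorem twoCol_ne (g : ℕ → ℕ) (n : ℕ) (h : g n < n) : twoCol g n ≠ twoCol g (g n) := by
  rw [twoCol, dif_pos h]
  simp

/-- The set mapping: a countable set of cozero sets outside of which nothing accumulates at `z`. -/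
theorem exists_catch {X : Type*} [TopologicalSpace X] (hF : IsFSpace X)
    (𝒲 : Set (Set X)) (hco : ∀ V ∈ 𝒲, IsCozero V) (hd : 𝒲.Pairwise Disjoint) (z : X) :
    ∃ A : Set (Set X), A.Countable ∧ ∀ B ⊆ 𝒲, B.Countable → Disjoint A B →
      z ∉ closure (⋃₀ B) := by
  by_cases h : ∃ A ⊆ 𝒲, A.Countable ∧ z ∈ closure (⋃₀ A)
  · obtain ⟨A, hA, hAc, hz⟩ := h
    refine ⟨A, hAc, fun B hB hBc hAB hzB => ?_⟩
    have hdis : Disjoint (⋃₀ A) (⋃₀ B) := by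
      rw [Set.disjoint_sUnion_left]
      intro s hs
      rw [Set.disjoint_sUnion_right]
      intro t ht
      exact hd (hA hs) (hB ht) (fun e => Set.disjoint_left.mp hAB hs (e ▸ ht))
    exact Set.disjoint_left.mp (fspace_disjoint_closure hF
      (cozero_sUnion A hAc (fun s hs => hco s (hA hs)))
      (cozero_sUnion B hBc (fun s hs => hco s (hB hs))) hdis) hz hzB
  · push Not at h
    exact ⟨∅, countable_empty, fun B hB hBc _ => h B hB hBc⟩

theorem main_seq {X : Type*} [TopologicalSpace X] [CompactSpace X] [T2Space X]
    (hF : IsFSpace X) (hccc : NowhereCCC X)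
    (f : C(X, X)) (hopen : IsOpenMap f) (F : ℕ → C(X, X)) (hFf : ∀ n, F n ≠ f) :
    ∃ (x : ℕ → X) (c : ℕ → Bool) (h : Bool → C(X, ℝ)),
      ∀ n, h (c n) (f (x n)) = 0 ∧ h (c n) (F n (x n)) = 1 := by
  have hU : ∀ n, ∃ U : Set X, IsOpen U ∧ U.Nonempty ∧ ∀ x ∈ U, F n x ∉ closure (f '' U) := by
    intro n
    obtain ⟨x, hx⟩ : ∃ x, F n x ≠ f x := by
      by_contra hc
      push Not at hc
      exact hFf n (ContinuousMap.ext hc)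
    obtain ⟨A, B, hA, hB, hxA, hxB, hAB⟩ := t2_separation hx
    refine ⟨F n ⁻¹' A ∩ f ⁻¹' B, (hA.preimage (F n).continuous).inter (hB.preimage f.continuous),
      ⟨x, hxA, hxB⟩, ?_⟩
    rintro y ⟨hyA, -⟩ hy
    have : closure (f '' (F n ⁻¹' A ∩ f ⁻¹' B)) ⊆ closure B := by
      apply closure_mono
      rintro _ ⟨w, ⟨-, hw⟩, rfl⟩
      exact hw
    exact Set.disjoint_left.mp (hAB.closure_right hA) hyA (this hy)
  choose U hUo hUne hUsep using hU
  obtain ⟨P, hP, hPd⟩ := disjoint_refinement hccc (fun n => f '' U n)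
    (fun n => ⟨hopen _ (hUo n), (hUne n).image f⟩)
  choose 𝒱 hunc hV hVd using fun n => ccc_cozero hccc (P n) (hP n).1 (hP n).2.1
  have hcross : ∀ m n, m ≠ n → ∀ V ∈ 𝒱 m, ∀ W ∈ 𝒱 n, Disjoint V W := by
    intro m n hmn V hV1 W hW1
    have : Disjoint (P m) (P n) := by
      rcases lt_or_gt_of_ne hmn with h | h
      · exact hPd m n h
      · exact (hPd n m h).symm
    exact this.mono (hV m V hV1).2.2 (hV n W hW1).2.2
  set 𝒲 : Set (Set X) := ⋃ n, 𝒱 n with h𝒲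
  have hWco : ∀ V ∈ 𝒲, IsCozero V := by
    intro V hV1
    obtain ⟨n, hn⟩ := mem_iUnion.mp hV1
    exact (hV n V hn).1
  have hWd : 𝒲.Pairwise Disjoint := by
    intro V hV1 W hW1 hne
    obtain ⟨m, hm⟩ := mem_iUnion.mp hV1
    obtain ⟨n, hn⟩ := mem_iUnion.mp hW1
    by_cases h : m = n
    · subst h
      exact hVd m hm hn hne
    · exact hcross m n h V hm W hn
  have hpt : ∀ n, ∀ V : Set X, ∃ x, V ∈ 𝒱 n → x ∈ U n ∧ f x ∈ V := by
    intro n V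
    by_cases h : V ∈ 𝒱 n
    · obtain ⟨-, ⟨y, hy⟩, hsub⟩ := hV n V h
      obtain ⟨x, hx, rfl⟩ := (hP n).2.2 (hsub hy)
      exact ⟨x, fun _ => ⟨hx, hy⟩⟩
    · exact ⟨(hUne n).some, fun h' => absurd h' h⟩
  choose pt hpt using hpt
  choose A hAc hA using fun z => exists_catch hF 𝒲 hWco hWd z
  have hpick : ∀ n (C : {C : Set (Set X) // C.Countable}), ∃ T ∈ 𝒱 n, T ∉ C.1 := by
    intro n C
    by_contra hc
    push Not at hc
    exact hunc n (C.2.mono hc)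
  choose pick hpick1 hpick2 using hpick
  let st : ℕ → {C : Set (Set X) // C.Countable} := fun k =>
    Nat.rec ⟨∅, countable_empty⟩
      (fun n C => ⟨C.1 ∪ A (F n (pt n (pick n C))), C.2.union (hAc _)⟩) k
  let T : ℕ → Set X := fun n => pick n (st n)
  let x : ℕ → X := fun n => pt n (T n)
  have hst : ∀ n, (st (n + 1)).1 = (st n).1 ∪ A (F n (x n)) := fun n => rfl
  have hstmono : ∀ m n, m < n → A (F m (x m)) ⊆ (st n).1 := by
    intro m n hmn
    induction n with
    | zero => omega
    | succ n ih =>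
      rw [hst]
      rcases Nat.lt_succ_iff_lt_or_eq.mp hmn with h | rfl
      · exact (ih h).trans subset_union_left
      · exact subset_union_right
  have hTmem : ∀ n, T n ∈ 𝒱 n := fun n => hpick1 n (st n)
  have hTW : ∀ n, T n ∈ 𝒲 := fun n => mem_iUnion.mpr ⟨n, hTmem n⟩
  have hTnot : ∀ m n, m < n → T n ∉ A (F m (x m)) := fun m n hmn h =>
    hpick2 n (st n) (hstmono m n hmn h)
  have hxU : ∀ n, x n ∈ U n := fun n => (hpt n (T n) (hTmem n)).1
  have hxT : ∀ n, f (x n) ∈ T n := fun n => (hpt n (T n) (hTmem n)).2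
  have hTco : ∀ n, IsCozero (T n) := fun n => hWco _ (hTW n)
  have hself : ∀ n, F n (x n) ∉ closure (T n) := by
    intro n h
    exact hUsep n (x n) (hxU n)
      (closure_mono ((hV n _ (hTmem n)).2.2.trans (hP n).2.2) h)
  have hlater : ∀ n, F n (x n) ∉ closure (⋃₀ (T '' {m | n < m})) := by
    intro n
    apply hA
    · rintro _ ⟨m, -, rfl⟩
      exact hTW m
    · exact (Set.to_countable _).image T
    · rw [Set.disjoint_right]
      rintro _ ⟨m, hm, rfl⟩
      exact hTnot n m hm
  have huniq : ∀ z m n, z ∈ closure (T m) → z ∈ closure (T n) → m = n := by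
    intro z m n hm hn
    by_contra hne
    exact Set.disjoint_left.mp (fspace_disjoint_closure hF (hTco m) (hTco n)
      (hcross m n hne _ (hTmem m) _ (hTmem n))) hm hn
  have hg : ∀ n, ∃ k, ∀ m, F n (x n) ∈ closure (T m) → m = k := by
    intro n
    by_cases h : ∃ m, F n (x n) ∈ closure (T m)
    · obtain ⟨k, hk⟩ := h
      exact ⟨k, fun m hm => huniq _ _ _ hm hk⟩
    · push Not at h
      exact ⟨0, fun m hm => absurd hm (h m)⟩
  choose g hg using hg
  let c := twoCol g
  have hc : ∀ n m, m < n → F n (x n) ∈ closure (T m) → c n ≠ c m := by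
    intro n m hmn hm
    have := hg n m hm
    subst this
    exact twoCol_ne g n hmn
  have hsep : ∀ i : Bool, ∃ h : C(X, ℝ), ∀ n, c n = i →
      h (f (x n)) = 0 ∧ h (F n (x n)) = 1 := by
    intro i
    have hVco : IsCozero (⋃₀ (T '' {m | c m = i})) := by
      apply cozero_sUnion _ ((Set.to_countable _).image T)
      rintro _ ⟨m, -, rfl⟩
      exact hTco m
    have hz : ∀ n, c n = i → F n (x n) ∉ closure (⋃₀ (T '' {m | c m = i})) := by
      intro n hn hmem
      have hsub : ⋃₀ (T '' {m | c m = i}) ⊆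
          (⋃ m ∈ {m | m < n ∧ c m = i}, T m) ∪ (T n ∪ ⋃₀ (T '' {m | n < m})) := by
        rintro y ⟨_, ⟨m, hm, rfl⟩, hy⟩
        rcases lt_trichotomy m n with h | h | h
        · exact Or.inl (mem_iUnion₂.mpr ⟨m, ⟨h, hm⟩, hy⟩)
        · subst h
          exact Or.inr (Or.inl hy)
        · exact Or.inr (Or.inr ⟨_, ⟨m, h, rfl⟩, hy⟩)
      have h2 := closure_mono hsub hmem
      have hfin : {m | m < n ∧ c m = i}.Finite :=
        (Set.finite_lt_nat n).subset (fun m hm => hm.1)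
      rw [closure_union, closure_union, hfin.closure_biUnion] at h2
      rcases h2 with h2 | h2 | h2
      · obtain ⟨m, ⟨hm1, hm2⟩, hm⟩ := mem_iUnion₂.mp h2
        exact hc n m hm1 hm (hn.trans hm2.symm)
      · exact hself n h2
      · exact hlater n h2
    have hW : ∀ n, ∃ W, IsCozero W ∧ (c n = i → F n (x n) ∈ W) ∧
        W ⊆ (closure (⋃₀ (T '' {m | c m = i})))ᶜ := by
      intro n
      by_cases hn : c n = i
      · obtain ⟨W, h1, h2, h3⟩ := exists_cozero_nhd isClosed_closure.isOpen_compl (hz n hn)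
        exact ⟨W, h1, fun _ => h2, h3⟩
      · exact ⟨∅, cozero_empty, fun h => absurd h hn, empty_subset _⟩
    choose W hW1 hW2 hW3 using hW
    obtain ⟨h, hcont, h0, h1⟩ := hF _ _ hVco (cozero_iUnion W hW1) (by
      rw [← Set.disjoint_iff_inter_eq_empty, Set.disjoint_right]
      intro y hy hy'
      obtain ⟨n, hn⟩ := mem_iUnion.mp hy
      exact hW3 n hn (subset_closure hy'))
    refine ⟨⟨h, hcont⟩, fun n hn => ⟨h0 _ ⟨_, ⟨n, hn, rfl⟩, hxT n⟩,
      h1 _ (mem_iUnion.mpr ⟨n, hW2 n hn⟩)⟩⟩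
  choose h hh using hsep
  exact ⟨x, c, h, fun n => hh (c n) n rfl⟩

/-- In a compact Hausdorff, nowhere c.c.c. F-space `X`, every open finite-to-one map
`f ∈ C(X, X)` is a weak P-point of `C_k(X, X)`. -/
theorem open_finiteToOne_isWeakPPoint
    (X : Type*) [TopologicalSpace X] [CompactSpace X] [T2Space X]
    (hF : IsFSpace X) (hccc : NowhereCCC X)
    (f : C(X, X)) (hopen : IsOpenMap f) (hfib : ∀ y : X, ((f : X → X) ⁻¹' {y}).Finite) :
    IsWeakPPoint f := by
  intro S hS hfS hcl
  rcases S.eq_empty_or_nonempty with rfl | hne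
  · simp at hcl
  obtain ⟨F, rfl⟩ := hS.exists_eq_range hne
  obtain ⟨x, c, h, hh⟩ := main_seq hF hccc f hopen F (fun n e => hfS ⟨n, e⟩)
  have hN : ∀ i : Bool, {g : C(X, X) | dist ((h i).comp g) ((h i).comp f) < 1} ∈ 𝓝 f := by
    intro i
    have hcont : Continuous fun g : C(X, X) => dist ((h i).comp g) ((h i).comp f) :=
      ((h i).continuous_postcomp).dist continuous_const
    exact (isOpen_lt hcont continuous_const).mem_nhds (by simp)
  obtain ⟨_, hg, ⟨n, rfl⟩⟩ := mem_closure_iff_nhds.mp hcl _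
    (Filter.inter_mem (hN true) (hN false))
  have hd : dist ((h (c n)).comp (F n)) ((h (c n)).comp f) < 1 := by
    cases c n
    · exact hg.2
    · exact hg.1
  have h2 := (ContinuousMap.dist_apply_le_dist (x n)).trans_lt hd
  simp [(hh n).1, (hh n).2] at h2
end

section
/- The set of all f ∈ C(ω*,ω*) that are restrictions to ω* of Stone–Čech extensions of injective maps ℕ → ℕ is dense in C_k(ω*,ω*), and every such f is a weak P-point of C_k(ω*,ω*). In particular, C_k(ω*,ω*) contains a dense set of weak P-points. -/
/-- `ω*`, the Stone–Čech remainder of the natural numbers. -/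
abbrev OmegaStar : Type := {x : StoneCech ℕ // x ∉ Set.range stoneCechUnit}

/-- The Stone–Čech extension `βφ : StoneCech ℕ → StoneCech ℕ` of a map `φ : ℕ → ℕ`. -/
noncomputable def betaExtend (φ : ℕ → ℕ) : StoneCech ℕ → StoneCech ℕ :=
  stoneCechExtend (continuous_stoneCechUnit.comp continuous_of_discreteTopology (f := φ))

open Set Filter Topology

/-- The canonical map from `βℕ` to ultrafilters. -/
noncomputable def toUlt : StoneCech ℕ → Ultrafilter ℕ :=
  stoneCechExtend (continuous_of_discreteTopology (f := (pure : ℕ → Ultrafilter ℕ)))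

lemma toUlt_cont : Continuous toUlt := continuous_stoneCechExtend _

lemma toUlt_unit (n : ℕ) : toUlt (stoneCechUnit n) = pure n := 
  congrFun (stoneCechExtend_extends
    (continuous_of_discreteTopology (f := (pure : ℕ → Ultrafilter ℕ)))) n

noncomputable def ofUlt : Ultrafilter ℕ → StoneCech ℕ := Ultrafilter.extend stoneCechUnit

lemma ofUlt_cont : Continuous ofUlt := continuous_ultrafilter_extend _

lemma ofUlt_toUlt (x : StoneCech ℕ) : ofUlt (toUlt x) = x := by
  have : ofUlt ∘ toUlt = id := by
    apply denseRange_stoneCechUnit.equalizer (ofUlt_cont.comp toUlt_cont) continuous_id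
    funext n
    simp [toUlt_unit, ofUlt]
  exact congrFun this x

lemma toUlt_ofUlt (x : Ultrafilter ℕ) : toUlt (ofUlt x) = x := by
  have : toUlt ∘ ofUlt = id := by
    apply denseRange_pure.equalizer (toUlt_cont.comp ofUlt_cont) continuous_id
    funext n
    simp [toUlt_unit, ofUlt]
  exact congrFun this x

lemma map_cont (φ : ℕ → ℕ) : Continuous (fun u : Ultrafilter ℕ => u.map φ) := by
  refine ultrafilterBasis_is_basis.continuous_iff.2 ?_
  rintro _ ⟨s, rfl⟩
  exact ultrafilter_isOpen_basic (φ ⁻¹' s)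

lemma betaExtend_cont (φ : ℕ → ℕ) : Continuous (betaExtend φ) := continuous_stoneCechExtend _

lemma toUlt_betaExtend (φ : ℕ → ℕ) (x : StoneCech ℕ) :
    toUlt (betaExtend φ x) = (toUlt x).map φ := by
  have : toUlt ∘ betaExtend φ = (fun u : Ultrafilter ℕ => u.map φ) ∘ toUlt := by
    apply denseRange_stoneCechUnit.equalizer (toUlt_cont.comp (betaExtend_cont φ))
      ((map_cont φ).comp toUlt_cont)
    funext n
    have h : betaExtend φ (stoneCechUnit n) = stoneCechUnit (φ n) :=
      congrFun (stoneCechExtend_extends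
        (continuous_stoneCechUnit.comp continuous_of_discreteTopology (f := φ))) n
    simp only [Function.comp, h, toUlt_unit]
    rfl
  exact congrFun this x

lemma toUlt_inj : Function.Injective toUlt := fun x y h => by
  rw [← ofUlt_toUlt x, h, ofUlt_toUlt]

lemma mem_range_iff (x : StoneCech ℕ) :
    x ∈ range (stoneCechUnit : ℕ → StoneCech ℕ) ↔ ∃ n, {n} ∈ toUlt x := by
  constructor
  · rintro ⟨n, rfl⟩
    exact ⟨n, by rw [toUlt_unit]; exact mem_pure.2 rfl⟩
  · rintro ⟨n, hn⟩
    refine ⟨n, toUlt_inj ?_⟩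
    rw [toUlt_unit]
    obtain ⟨m, hm, h⟩ := Ultrafilter.eq_pure_of_finite_mem (finite_singleton n) hn
    rw [h, mem_singleton_iff.1 hm]

/-- The ultrafilter of a point of `ω*`. -/
noncomputable def ult (x : OmegaStar) : Ultrafilter ℕ := toUlt x.1

lemma ult_inj : Function.Injective ult := fun _ _ h => Subtype.ext (toUlt_inj h)

lemma ult_cont : Continuous ult := toUlt_cont.comp continuous_subtype_val

lemma ult_infinite {x : OmegaStar} {A : Set ℕ} (h : A ∈ ult x) : A.Infinite := by
  intro hf
  obtain ⟨m, hm, h'⟩ := Ultrafilter.eq_pure_of_finite_mem hf h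
  apply x.2
  rw [mem_range_iff]
  exact ⟨m, by change {m} ∈ ult x; rw [h']; exact mem_pure.2 rfl⟩

lemma exists_ult_eq (u : Ultrafilter ℕ) (hu : ∀ n, {n} ∉ u) : ∃ x, ult x = u := by
  refine ⟨⟨ofUlt u, ?_⟩, toUlt_ofUlt u⟩
  rw [mem_range_iff, toUlt_ofUlt]
  rintro ⟨n, hn⟩
  exact hu n hn

lemma exists_mem_ult {A : Set ℕ} (hA : A.Infinite) : ∃ x, A ∈ ult x := by
  have : NeBot (cofinite ⊓ 𝓟 A) := cofinite_inf_principal_neBot_iff.2 hA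
  have h := Ultrafilter.of_le (cofinite ⊓ 𝓟 A)
  obtain ⟨x, hx⟩ := exists_ult_eq (Ultrafilter.of (cofinite ⊓ 𝓟 A)) (by
    intro n hn
    have : ({n} : Set ℕ)ᶜ ∈ Ultrafilter.of (cofinite ⊓ 𝓟 A) :=
      h (mem_inf_of_left (finite_singleton n).compl_mem_cofinite)
    exact Ultrafilter.compl_mem_iff_notMem.1 this hn)
  exact ⟨x, hx ▸ h (mem_inf_of_right (mem_principal_self A))⟩

/-- The basic clopen subset of `ω*`. -/
def cl (A : Set ℕ) : Set OmegaStar := {x | A ∈ ult x}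

lemma mem_cl {A : Set ℕ} {x : OmegaStar} : x ∈ cl A ↔ A ∈ ult x := Iff.rfl

lemma cl_isOpen (A : Set ℕ) : IsOpen (cl A) := (ultrafilter_isOpen_basic A).preimage ult_cont

lemma cl_isClosed (A : Set ℕ) : IsClosed (cl A) :=
  (ultrafilter_isClosed_basic A).preimage ult_cont

lemma exists_cl_subset {O : Set OmegaStar} (hO : IsOpen O) {x : OmegaStar} (hx : x ∈ O) :
    ∃ A, A ∈ ult x ∧ cl A ⊆ O := by
  obtain ⟨O', hO', rfl⟩ := isOpen_induced_iff.1 hO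
  have h2 : IsOpen (ofUlt ⁻¹' O') := hO'.preimage ofUlt_cont
  have hx' : ult x ∈ ofUlt ⁻¹' O' := by
    change ofUlt (toUlt x.1) ∈ O'
    rw [ofUlt_toUlt]; exact hx
  obtain ⟨_, ⟨A, rfl⟩, hA, hs⟩ := ultrafilterBasis_is_basis.exists_subset_of_mem_open hx' h2
  refine ⟨A, hA, fun y hy => ?_⟩
  have : ofUlt (toUlt y.1) ∈ O' := hs hy
  rwa [ofUlt_toUlt] at this

instance omegaStar_compact : CompactSpace OmegaStar := by
  apply isCompact_iff_compactSpace.1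
  apply IsClosed.isCompact
  have : {x : StoneCech ℕ | x ∉ range (stoneCechUnit : ℕ → StoneCech ℕ)} =
      ⋂ n : ℕ, toUlt ⁻¹' {u | {n}ᶜ ∈ u} := by
    ext x
    simp only [mem_iInter, mem_preimage]
    change ¬ _ ↔ ∀ i : ℕ, {i}ᶜ ∈ toUlt x
    rw [mem_range_iff, not_exists]
    simp only [Ultrafilter.compl_mem_iff_notMem]
  change IsClosed {x : StoneCech ℕ | x ∉ range (stoneCechUnit : ℕ → StoneCech ℕ)}
  rw [this]
  exact isClosed_iInter fun n => (ultrafilter_isClosed_basic _).preimage toUlt_cont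

lemma exists_cl_between {K O : Set OmegaStar} (hK : IsCompact K) (hO : IsOpen O) (h : K ⊆ O) :
    ∃ A, K ⊆ cl A ∧ cl A ⊆ O := by
  refine hK.induction_on (p := fun K => ∃ A, K ⊆ cl A ∧ cl A ⊆ O) ?_ ?_ ?_ ?_
  · refine ⟨∅, empty_subset _, fun x hx => ?_⟩
    exact (Ultrafilter.empty_notMem hx).elim
  · rintro s t hst ⟨A, h1, h2⟩
    exact ⟨A, hst.trans h1, h2⟩
  · rintro s t ⟨A, h1, h2⟩ ⟨B, h3, h4⟩
    refine ⟨A ∪ B, union_subset (fun x hx => ?_) (fun x hx => ?_), fun x hx => ?_⟩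
    · exact mem_of_superset (h1 hx) subset_union_left
    · exact mem_of_superset (h3 hx) subset_union_right
    · rcases Ultrafilter.union_mem_iff.1 hx with h | h
      exacts [h2 h, h4 h]
  · intro x hx
    obtain ⟨A, hA, hs⟩ := exists_cl_subset hO (h hx)
    exact ⟨cl A, mem_nhdsWithin_of_mem_nhds ((cl_isOpen A).mem_nhds hA), A, subset_rfl, hs⟩

lemma exists_preimage (f : C(OmegaStar, OmegaStar)) (B : Set ℕ) :
    ∃ A : Set ℕ, ∀ x, A ∈ ult x ↔ B ∈ ult (f x) := by
  have h1 : IsOpen (f ⁻¹' cl B) := (cl_isOpen B).preimage f.continuous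
  have h2 : IsCompact (f ⁻¹' cl B) := ((cl_isClosed B).preimage f.continuous).isCompact
  obtain ⟨A, hA, hA'⟩ := exists_cl_between h2 h1 subset_rfl
  exact ⟨A, fun x => ⟨fun h => hA' h, fun h => hA h⟩⟩

lemma isRestr_iff (φ : ℕ → ℕ) (f : C(OmegaStar, OmegaStar)) :
    (∀ x : OmegaStar, betaExtend φ (x : StoneCech ℕ) = (f x : StoneCech ℕ)) ↔
      ∀ x, ult (f x) = (ult x).map φ := by
  refine forall_congr' fun x => ?_
  rw [← toUlt_inj.eq_iff, toUlt_betaExtend]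
  exact eq_comm

lemma exists_restr (φ : ℕ → ℕ) (hφ : Function.Injective φ) : ∃ f : C(OmegaStar, OmegaStar),
    ∀ x : OmegaStar, betaExtend φ (x : StoneCech ℕ) = (f x : StoneCech ℕ) := by
  have key : ∀ x : OmegaStar, betaExtend φ x.1 ∉ range (stoneCechUnit : ℕ → StoneCech ℕ) := by
    intro x hx
    rw [mem_range_iff] at hx
    obtain ⟨n, hn⟩ := hx
    rw [toUlt_betaExtend] at hn
    have : φ ⁻¹' {n} ∈ ult x := hn
    exact ult_infinite this ((finite_singleton n).preimage hφ.injOn)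
  exact ⟨⟨fun x => ⟨betaExtend φ x.1, key x⟩,
    ((betaExtend_cont φ).comp continuous_subtype_val).subtype_mk _⟩, fun x => rfl⟩

lemma nhd_basis (f : C(OmegaStar, OmegaStar)) (W : Set C(OmegaStar, OmegaStar)) (hW : IsOpen W)
    (hf : f ∈ W) : ∃ F : Finset (Set ℕ), ∀ g : C(OmegaStar, OmegaStar),
      (∀ B ∈ F, ∀ x, B ∈ ult (g x) ↔ B ∈ ult (f x)) → g ∈ W := by
  classical
  have hW' : TopologicalSpace.GenerateOpen _ W := hW
  induction hW' with
  | basic s hs =>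
    obtain ⟨K, hK, O, hO, rfl⟩ := hs
    have hf' : f '' K ⊆ O := by
      rintro _ ⟨x, hx, rfl⟩
      exact hf hx
    obtain ⟨B, h1, h2⟩ := exists_cl_between (hK.image f.continuous) hO hf'
    refine ⟨{B}, fun g hg x hx => h2 ?_⟩
    exact (hg B (Finset.mem_singleton_self B) x).2 (h1 ⟨x, hx, rfl⟩)
  | univ => exact ⟨∅, fun g _ => mem_univ g⟩
  | inter s t hs ht ihs iht =>
    obtain ⟨F, hF⟩ := ihs hs hf.1
    obtain ⟨G, hG⟩ := iht ht hf.2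
    exact ⟨F ∪ G, fun g hg => ⟨hF g fun B hB => hg B (Finset.mem_union_left _ hB),
      hG g fun B hB => hg B (Finset.mem_union_right _ hB)⟩⟩
  | sUnion S hS ih =>
    obtain ⟨s, hs, hfs⟩ := hf
    obtain ⟨F, hF⟩ := ih s hs (hS s hs) hfs
    exact ⟨F, fun g hg => ⟨s, hs, hF g hg⟩⟩

lemma dense_part : Dense {f : C(OmegaStar, OmegaStar) |
      ∃ φ : ℕ → ℕ, Function.Injective φ ∧
        ∀ x : OmegaStar, betaExtend φ (x : StoneCech ℕ) = (f x : StoneCech ℕ)} := by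
  classical
  intro f
  rw [mem_closure_iff]
  intro W hW hfW
  obtain ⟨F, hF⟩ := nhd_basis f W hW hfW
  choose A hA using exists_preimage f
  let σ : ℕ → (F → Prop) := fun a B => a ∈ A B.1
  let τ : ℕ → (F → Prop) := fun b B => b ∈ B.1
  have hinf : ∀ s, (σ ⁻¹' {s}).Infinite → (τ ⁻¹' {s}).Infinite := by
    intro s hs
    obtain ⟨x, hx⟩ := exists_mem_ult hs
    apply ult_infinite (x := f x)
    have : τ ⁻¹' {s} = ⋂ B : F, {b | b ∈ B.1 ↔ s B} := by
      ext b
      simp only [mem_preimage, mem_singleton_iff, mem_iInter]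
      constructor
      · rintro rfl B; exact Iff.rfl
      · intro h; funext B; exact propext (h B)
    rw [this]
    refine (iInter_mem (f := (ult (f x) : Filter ℕ))).2 fun B => ?_
    by_cases hsB : s B
    · have h1 : A B.1 ∈ ult x := by
        refine mem_of_superset hx ?_
        rintro a rfl
        exact hsB
      refine mem_of_superset ((hA _ x).1 h1) ?_
      intro b hb
      exact ⟨fun _ => hsB, fun _ => hb⟩
    · have h1 : A B.1 ∉ ult x := by
        rw [← Ultrafilter.compl_mem_iff_notMem]
        refine mem_of_superset hx ?_
        rintro a rfl
        exact hsB
      have h2 : (B.1)ᶜ ∈ ult (f x) := by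
        rw [Ultrafilter.compl_mem_iff_notMem, ← hA]; exact h1
      refine mem_of_superset h2 ?_
      intro b hb
      exact ⟨fun h => absurd h hb, fun h => absurd h hsB⟩
  obtain ⟨s0, hs0⟩ : ∃ s, (σ ⁻¹' {s}).Infinite := by
    by_contra! h
    have : (⋃ s, σ ⁻¹' {s}).Finite := finite_iUnion fun s => h s
    rw [← preimage_iUnion, iUnion_of_singleton, preimage_univ] at this
    exact infinite_univ this
  let σ' : ℕ → (F → Prop) := fun a => if (σ ⁻¹' {σ a}).Infinite then σ a else s0
  have hσ' : ∀ a, (Set.ofPred fun b => τ b = σ' a).Infinite := by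
    intro a
    apply hinf
    by_cases h : (σ ⁻¹' {σ a}).Infinite
    · simpa only [σ', if_pos h] using h
    · simpa only [σ', if_neg h] using hs0
  let φ : ℕ → ℕ := fun a => Nat.nth (fun b => τ b = σ' a) a
  have hτφ : ∀ a, τ (φ a) = σ' a := fun a => Nat.nth_mem_of_infinite (hσ' a) a
  have hφ : Function.Injective φ := by
    intro a b hab
    have h : σ' a = σ' b := by rw [← hτφ, ← hτφ, hab]
    simp only [φ, h] at hab
    exact Nat.nth_injective (hσ' b) hab
  obtain ⟨g, hg⟩ := exists_restr φ hφ
  refine ⟨g, hF g ?_, φ, hφ, hg⟩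
  rw [isRestr_iff] at hg
  intro B hB x
  rw [hg, ← hA]
  change φ ⁻¹' B ∈ ult x ↔ _
  have hgood : {a | σ' a = σ a} ∈ ult x := by
    by_contra hc
    rw [← Ultrafilter.compl_mem_iff_notMem] at hc
    apply ult_infinite hc
    have : (⋃ s ∈ {s | (σ ⁻¹' {s}).Finite}, σ ⁻¹' {s}).Finite :=
      (toFinite _).biUnion fun s hs => hs
    refine this.subset fun a ha => ?_
    refine mem_biUnion (x := σ a) ?_ rfl
    change (σ ⁻¹' {σ a}).Finite
    by_contra h
    exact ha (if_pos h)
  have hcongr : ∀ a, σ' a = σ a → (a ∈ φ ⁻¹' B ↔ a ∈ A B) := by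
    intro a ha
    have := congrFun ((hτφ a).trans ha) ⟨B, hB⟩
    exact iff_of_eq this
  constructor
  · intro h
    filter_upwards [h, hgood] with a h1 h2 using (hcongr a h2).1 h1
  · intro h
    filter_upwards [h, hgood] with a h1 h2 using (hcongr a h2).2 h1

lemma exists_split {D : Set ℕ} (hD : D.Infinite) :
    ∃ A B : Set ℕ, A ⊆ D ∧ B ⊆ D ∧ A.Infinite ∧ B.Infinite ∧ Disjoint A B := by
  obtain ⟨t, u, h1, h2, h3⟩ := hD.exists_union_disjoint_cardinal_eq_of_infinite
  have hiff : t.Finite ↔ u.Finite := by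
    rw [← Cardinal.lt_aleph0_iff_set_finite, h3, Cardinal.lt_aleph0_iff_set_finite]
  refine ⟨t, u, h1 ▸ subset_union_left, h1 ▸ subset_union_right, fun h => ?_, fun h => ?_, h2⟩
  · exact hD (h1 ▸ h.union (hiff.1 h))
  · exact hD (h1 ▸ (hiff.2 h).union h)

lemma exists_shrink {φ : ℕ → ℕ} (hφ : Function.Injective φ) (q : ℕ → Ultrafilter ℕ)
    {D : Set ℕ} (hD : D.Infinite) (i : ℕ) :
    ∃ A ⊆ D, A.Infinite ∧ ∀ j < i, φ '' A ∉ q j := by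
  induction i with
  | zero => exact ⟨D, subset_rfl, hD, fun j hj => absurd hj (Nat.not_lt_zero j)⟩
  | succ i ih =>
    obtain ⟨A, hAD, hA, hq⟩ := ih
    obtain ⟨B, C, hB, hC, hBi, hCi, hdis⟩ := exists_split hA
    have key : φ '' B ∉ q i ∨ φ '' C ∉ q i := by
      by_contra! h
      have := inter_mem h.1 h.2
      rw [← image_inter hφ, hdis.inter_eq, image_empty] at this
      exact Ultrafilter.empty_notMem this
    have fin : ∀ E ⊆ A, E.Infinite → φ '' E ∉ q i →
        ∃ A ⊆ D, A.Infinite ∧ ∀ j < i + 1, φ '' A ∉ q j := by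
      intro E hE hEi hEq
      refine ⟨E, hE.trans hAD, hEi, fun j hj => ?_⟩
      rcases Nat.lt_succ_iff_lt_or_eq.1 hj with h | rfl
      · exact fun h' => hq j h (mem_of_superset h' (image_mono hE))
      · exact hEq
    rcases key with h | h
    exacts [fin B hB hBi h, fin C hC hCi h]

/-- Course-of-values recursion. -/
noncomputable def courseSeq {α : Type} (F : ∀ i : ℕ, (∀ j < i, α) → α) (i : ℕ) : α :=
  F i (fun j _ => courseSeq F j)
termination_by i

lemma exists_courseSeq {α : Type} [Inhabited α] (R : ℕ → (ℕ → α) → α → Prop)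
    (hR : ∀ i a, ∃ y, R i a y)
    (hloc : ∀ i a b y, (∀ j < i, a j = b j) → R i a y → R i b y) :
    ∃ a : ℕ → α, ∀ i, R i a (a i) := by
  classical
  choose c hc using hR
  let F : ∀ i : ℕ, (∀ j < i, α) → α :=
    fun i g => c i (fun j => if h : j < i then g j h else default)
  refine ⟨courseSeq F, fun i => ?_⟩
  rw [courseSeq]
  refine hloc i _ _ _ ?_ (hc i _)
  intro j hj
  simp only [dif_pos hj]

/-- The node of the binary tree at level `n` along the branch `t`. -/
def node (t : ℕ → Bool) (n : ℕ) : ℕ := Encodable.encode ((List.range n).map t)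

/-- The level of a node. -/
def level (i : ℕ) : ℕ := ((Encodable.decode (α := List Bool) i).getD []).length

lemma level_node (t : ℕ → Bool) (n : ℕ) : level (node t n) = n := by
  simp [level, node]

lemma node_inter_finite {t s : ℕ → Bool} (h : t ≠ s) :
    (range (node t) ∩ range (node s)).Finite := by
  obtain ⟨k, hk⟩ := Function.ne_iff.1 h
  refine ((finite_Iic k).image (node t)).subset ?_
  rintro _ ⟨⟨n, rfl⟩, ⟨m, hm⟩⟩
  refine ⟨n, ?_, rfl⟩
  have hmn : m = n := by rw [← level_node s m, hm, level_node]
  subst hmn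
  by_contra hlt
  have hlt : k < m := not_le.1 hlt
  have h2 := Encodable.encode_injective hm
  have h3 := List.map_inj_left.1 h2 k (List.mem_range.2 hlt)
  exact hk h3.symm

/-- The combinatorial core: disjoint sets `E i`, ultrafilters `q i` with `E m ∉ q i` for `i ≤ m`. -/
lemma core (E : ℕ → Set ℕ) (hE : Pairwise fun i j => Disjoint (E i) (E j))
    (q : ℕ → Ultrafilter ℕ) (hq : ∀ i m, i ≤ m → E m ∉ q i) :
    ∃ (t : ℕ → Bool) (B : Bool → Set ℕ), ∀ n, ∃ c, E (node t n) ⊆ B c ∧ B c ∉ q (node t n) := by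
  classical
  have hne : ∀ {i a b}, E a ∈ q i → E b ∈ q i → a = b := by
    intro i a b ha hb
    by_contra hab
    have := inter_mem ha hb
    rw [(hE hab).inter_eq] at this
    exact Ultrafilter.empty_notMem this
  obtain ⟨c, hc⟩ : ∃ c : ℕ → Bool, ∀ i, ∀ m < i, E m ∈ q i → c i ≠ c m := by
    refine exists_courseSeq (fun i a y => ∀ m < i, E m ∈ q i → y ≠ a m) ?_ ?_
    · intro i a
      by_cases h : ∃ m, E m ∈ q i
      · obtain ⟨m, hm⟩ := h
        refine ⟨!(a m), fun m' _ hm' => ?_⟩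
        rw [hne hm' hm]
        cases a m <;> simp
      · exact ⟨true, fun m _ hm => absurd ⟨m, hm⟩ h⟩
    · intro i a b y hab h m hm hE
      rw [← hab m hm]
      exact h m hm hE
  let Bt : (ℕ → Bool) → Set ℕ := fun t => ⋃ i ∈ range (node t), E i
  obtain ⟨t, ht⟩ : ∃ t, ∀ j, Bt t ∈ q j → ∃ m, E m ∈ q j := by
    by_contra! h
    choose j hj1 hj2 using h
    have hinj : Function.Injective j := by
      intro t s hts
      by_contra hne'
      have h1 := hj1 t
      have h2 := hj1 s
      rw [← hts] at h2
      have h3 : (⋃ i ∈ range (node t) ∩ range (node s), E i) ∈ q (j t) := by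
        refine mem_of_superset (inter_mem h1 h2) ?_
        rintro x ⟨hx1, hx2⟩
        simp only [Bt, mem_iUnion₂] at hx1 hx2
        obtain ⟨a, ha, hxa⟩ := hx1
        obtain ⟨b, hb, hxb⟩ := hx2
        have hab : a = b := by
          by_contra hab
          exact disjoint_left.1 (hE hab) hxa hxb
        subst hab
        exact mem_biUnion (x := a) ⟨ha, hb⟩ hxa
      obtain ⟨i, -, hi⟩ := (Ultrafilter.finite_biUnion_mem_iff (node_inter_finite hne')).1 h3
      exact hj2 t i hi
    have : Countable (ℕ → Bool) := hinj.countable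
    have h2 : Countable (Set ℕ) :=
      Function.Injective.countable (f := fun (s : Set ℕ) (n : ℕ) => decide (n ∈ s)) (by
        intro s s' h
        ext n
        simpa using congrFun h n)
    obtain ⟨g, hg⟩ := exists_injective_nat (Set ℕ)
    exact Function.cantor_injective g hg
  refine ⟨t, fun b => ⋃ i ∈ {i | i ∈ range (node t) ∧ c i = b}, E i, fun n => ?_⟩
  refine ⟨c (node t n), ?_, fun hB => ?_⟩
  · exact subset_biUnion_of_mem (u := E)
      (show node t n ∈ {i | i ∈ range (node t) ∧ c i = c (node t n)} from ⟨⟨n, rfl⟩, rfl⟩)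
  · obtain ⟨m, hm⟩ := ht (node t n) (mem_of_superset hB
      (biUnion_subset_biUnion_left fun i hi => hi.1))
    have hlt : m < node t n := by
      by_contra hle
      exact hq _ _ (not_lt.1 hle) hm
    have hcm := hc _ m hlt hm
    obtain ⟨x, hx1, hx2⟩ := Ultrafilter.nonempty_of_mem (inter_mem hB hm)
    obtain ⟨i, hi, hxi⟩ := mem_iUnion₂.1 hx1
    have him : i = m := by
      by_contra him
      exact disjoint_left.1 (hE him) hxi hx2
    subst him
    exact hcm hi.2.symm

lemma exists_disjoint_refinement (C : ℕ → Set ℕ) (hC : ∀ i, (C i).Infinite) :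
    ∃ D : ℕ → Set ℕ, (∀ i, D i ⊆ C i) ∧ (∀ i, (D i).Infinite) ∧
      Pairwise fun i j => Disjoint (D i) (D j) := by
  obtain ⟨a, ha, haC⟩ := extraction_forall_of_frequently
    (P := fun n k => k ∈ C (Nat.unpair n).1) (fun n => Nat.frequently_atTop_iff_infinite.2 (hC _))
  refine ⟨fun i => range fun k => a (Nat.pair i k), ?_, ?_, ?_⟩
  · rintro i _ ⟨k, rfl⟩
    simpa using haC (Nat.pair i k)
  · intro i
    refine infinite_range_of_injective fun k l h => ?_
    exact (Nat.pair_eq_pair.1 (ha.injective h)).2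
  · intro i j hij
    rw [disjoint_left]
    rintro _ ⟨k, rfl⟩ ⟨l, h⟩
    exact hij (Nat.pair_eq_pair.1 (ha.injective h)).1.symm

lemma weakP_part (f : C(OmegaStar, OmegaStar)) (φ : ℕ → ℕ) (hφ : Function.Injective φ)
    (hf : ∀ x, ult (f x) = (ult x).map φ) : IsWeakPPoint f := by
  intro S hS hfS hcl
  have hne : S.Nonempty := by
    rw [nonempty_iff_ne_empty]
    rintro rfl
    simp at hcl
  obtain ⟨g, rfl⟩ := hS.exists_eq_range hne
  have hfg : ∀ n, ∃ C : Set ℕ, C.Infinite ∧ ∀ x, C ∈ ult x → f x ≠ g n x := by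
    intro n
    have h1 : f ≠ g n := fun h => hfS ⟨n, h.symm⟩
    obtain ⟨x, hx⟩ := DFunLike.ne_iff.1 h1
    have hO : IsOpen {x | f x ≠ g n x} := isOpen_ne_fun f.continuous (g n).continuous
    obtain ⟨C, hC, hs⟩ := exists_cl_subset hO (x := x) hx
    exact ⟨C, ult_infinite hC, fun y hy => hs hy⟩
  choose C hCinf hC using hfg
  obtain ⟨D, hDC, hDinf, hDdis⟩ :=
    exists_disjoint_refinement (fun i => C (level i)) (fun i => hCinf _)
  obtain ⟨x0, -⟩ := exists_mem_ult (hCinf 0)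
  have : Inhabited OmegaStar := ⟨x0⟩
  obtain ⟨x, hx⟩ : ∃ x : ℕ → OmegaStar, ∀ i, ∃ A ⊆ D i, A ∈ ult (x i) ∧
      ∀ j < i, φ '' A ∉ ult (g (level j) (x j)) := by
    refine exists_courseSeq (fun i x y => ∃ A ⊆ D i, A ∈ ult y ∧
      ∀ j < i, φ '' A ∉ ult (g (level j) (x j))) ?_ ?_
    · intro i x
      obtain ⟨A, hA, hAi, hAq⟩ :=
        exists_shrink hφ (fun j => ult (g (level j) (x j))) (hDinf i) i
      obtain ⟨y, hy⟩ := exists_mem_ult hAi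
      exact ⟨y, A, hA, hy, hAq⟩
    · rintro i a b y hab ⟨A, hA, hAy, hAq⟩
      exact ⟨A, hA, hAy, fun j hj => hab j hj ▸ hAq j hj⟩
  have hx' : ∀ i, ∃ A ⊆ D i, A ∈ ult (x i) ∧
      ∀ j ≤ i, φ '' A ∉ ult (g (level j) (x j)) := by
    intro i
    obtain ⟨A, hA, hAx, hAq⟩ := hx i
    have hneq : ult (f (x i)) ≠ ult (g (level i) (x i)) :=
      fun h => hC (level i) (x i) (mem_of_superset hAx (hA.trans (hDC i))) (ult_inj h)
    obtain ⟨V, hV1, hV2⟩ : ∃ V, V ∈ ult (f (x i)) ∧ V ∉ ult (g (level i) (x i)) := by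
      by_contra! h
      exact hneq (Ultrafilter.eq_of_le (fun s hs => by
        by_contra hns
        have h1 := Ultrafilter.compl_mem_iff_notMem.2 hns
        exact Ultrafilter.compl_mem_iff_notMem.1 (h _ h1) hs))
    rw [hf] at hV1
    have hV1' : φ ⁻¹' V ∈ ult (x i) := hV1
    refine ⟨A ∩ φ ⁻¹' V, inter_subset_left.trans hA, inter_mem hAx hV1', fun j hj hmem => ?_⟩
    rcases hj.lt_or_eq with h | rfl
    · exact hAq j h (mem_of_superset hmem (image_mono inter_subset_left))
    · refine hV2 (mem_of_superset hmem ?_)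
      rintro _ ⟨a, ha, rfl⟩
      exact ha.2
  choose A hAD hAx hAq using hx'
  obtain ⟨t, B, hB⟩ := core (fun i => φ '' A i)
    (fun i j hij => (disjoint_image_iff hφ).2 ((hDdis hij).mono (hAD i) (hAD j)))
    (fun i => ult (g (level i) (x i))) (fun i m him => hAq m i him)
  let W : Bool → Set C(OmegaStar, OmegaStar) :=
    fun b => {h | MapsTo h (cl (φ ⁻¹' B b)) (cl (B b))}
  have hWo : IsOpen (W true ∩ W false) :=
    (ContinuousMap.isOpen_setOfPred_mapsTo (cl_isClosed _).isCompact (cl_isOpen _)).inter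
      (ContinuousMap.isOpen_setOfPred_mapsTo (cl_isClosed _).isCompact (cl_isOpen _))
  have hfW : ∀ b, f ∈ W b := by
    intro b y hy
    change B b ∈ ult (f y)
    rw [hf]
    exact hy
  obtain ⟨_, hgW, n, rfl⟩ := mem_closure_iff.1 hcl _ hWo ⟨hfW _, hfW _⟩
  have hgW' : ∀ b, g n ∈ W b := by
    intro b
    cases b
    exacts [hgW.2, hgW.1]
  obtain ⟨c, hc1, hc2⟩ := hB n
  rw [level_node] at hc2
  refine hc2 (hgW' c ?_)
  change φ ⁻¹' B c ∈ ult _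
  exact mem_of_superset (hAx (node t n)) (image_subset_iff.1 hc1)

/-- The restrictions to `ω*` of Stone–Čech extensions of injective maps `ℕ → ℕ` form a dense
set of weak P-points in `C_k(ω*, ω*)`. -/
theorem dense_weakPPoints :
    Dense {f : C(OmegaStar, OmegaStar) |
      ∃ φ : ℕ → ℕ, Function.Injective φ ∧
        ∀ x : OmegaStar, betaExtend φ (x : StoneCech ℕ) = (f x : StoneCech ℕ)} ∧
    ∀ f ∈ {f : C(OmegaStar, OmegaStar) |
      ∃ φ : ℕ → ℕ, Function.Injective φ ∧
        ∀ x : OmegaStar, betaExtend φ (x : StoneCech ℕ) = (f x : StoneCech ℕ)},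
      IsWeakPPoint f := by
  refine ⟨dense_part, ?_⟩
  rintro f ⟨φ, hφ, hf⟩
  exact weakP_part f φ hφ ((isRestr_iff φ f).1 hf)
end
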